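/- arXiv:1209.0068 — 11 statements merged into one kernel-verified Lean document; each statement's English description precedes it below -/
import Mathlib

section
/- Let M, M' be m×p real matrices of rank p and N, N' be n×p real matrices of rank p. Then M Nᵀ = M' N'ᵀ if and only if there exists an invertible p×p real matrix R such that M' = M R and N' = N R⁻ᵀ. Consequently, the fiber of the map π(M,N) = M Nᵀ over M Nᵀ is { (M R, N R⁻ᵀ) : R ∈ GL(p) }. -/
open Matrix

theorem exists_left_inv_of_rank {m p : ℕ} (M : Matrix (Fin m) (Fin p) ℝ) (hM : M.rank = p) :
    ∃ L : Matrix (Fin p) (Fin m) ℝ, L * M = 1 := by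
  have h1 : (Mᵀ * M).rank = p := by rw [rank_transpose_mul_self, hM]
  have h2 : IsUnit (Mᵀ * M) := by
    rw [← Matrix.mulVec_surjective_iff_isUnit]
    have : LinearMap.range (Mᵀ * M).mulVecLin = ⊤ := by
      apply Submodule.eq_top_of_finrank_eq
      rw [Module.finrank_fin_fun]
      exact h1
    exact LinearMap.range_eq_top.mp this
  refine ⟨(Mᵀ * M)⁻¹ * Mᵀ, ?_⟩
  rw [Matrix.mul_assoc, Matrix.nonsing_inv_mul _ ((Matrix.isUnit_iff_isUnit_det _).mp h2)]

theorem fiber_aux {m n p : ℕ}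
    (M M' : Matrix (Fin m) (Fin p) ℝ) (N N' : Matrix (Fin n) (Fin p) ℝ)
    (hM : M.rank = p) (hN : N.rank = p) (hN' : N'.rank = p) :
    M * Nᵀ = M' * N'ᵀ ↔
      ∃ R : Matrix (Fin p) (Fin p) ℝ, IsUnit R ∧ M' = M * R ∧ N' = N * (R⁻¹)ᵀ := by
  constructor
  · intro h
    obtain ⟨L, hL⟩ := exists_left_inv_of_rank M hM
    obtain ⟨K, hK⟩ := exists_left_inv_of_rank N hN
    obtain ⟨K', hK'⟩ := exists_left_inv_of_rank N' hN'
    have tK : Nᵀ * Kᵀ = 1 := by rw [← transpose_mul, hK, transpose_one]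
    have tK' : N'ᵀ * K'ᵀ = 1 := by rw [← transpose_mul, hK', transpose_one]
    have e1 : M' = M * (Nᵀ * K'ᵀ) := by
      rw [← Matrix.mul_assoc, h, Matrix.mul_assoc, tK', Matrix.mul_one]
    have e2 : M = M' * (N'ᵀ * Kᵀ) := by
      rw [← Matrix.mul_assoc, ← h, Matrix.mul_assoc, tK, Matrix.mul_one]
    generalize Nᵀ * K'ᵀ = R at e1
    generalize N'ᵀ * Kᵀ = S at e2
    have hRS : R * S = 1 := by
      have : L * M = L * (M * R * S) := by rw [← e1, ← e2]
      rw [Matrix.mul_assoc, ← Matrix.mul_assoc, hL, Matrix.one_mul] at this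
      exact this.symm
    have hd : IsUnit R.det := Matrix.isUnit_det_of_right_inverse hRS
    have e3 : Nᵀ = R * N'ᵀ := by
      have : L * (M * Nᵀ) = L * (M * (R * N'ᵀ)) := by rw [← Matrix.mul_assoc M R, ← e1, h]
      simpa only [← Matrix.mul_assoc L M, hL, Matrix.one_mul] using this
    refine ⟨R, (Matrix.isUnit_iff_isUnit_det _).mpr hd, e1, ?_⟩
    apply Matrix.transpose_injective
    rw [transpose_mul, transpose_transpose, e3, Matrix.nonsing_inv_mul_cancel_left _ _ hd]
  · rintro ⟨R, hR, rfl, rfl⟩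
    have hd := (Matrix.isUnit_iff_isUnit_det _).mp hR
    rw [transpose_mul, transpose_transpose, Matrix.mul_assoc,
      Matrix.mul_nonsing_inv_cancel_left _ _ hd]

/-- M Nᵀ = M' N'ᵀ iff M' = M R and N' = N R⁻ᵀ for some invertible R; consequently
the fiber of π(M,N) = M Nᵀ over M Nᵀ is { (M R, N R⁻ᵀ) : R ∈ GL(p) }. -/
theorem fiber_GL (m n p : ℕ) (hp : 0 < p) (hpm : p ≤ m) (hpn : p ≤ n)
    (M M' : Matrix (Fin m) (Fin p) ℝ) (N N' : Matrix (Fin n) (Fin p) ℝ)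
    (hM : M.rank = p) (hM' : M'.rank = p) (hN : N.rank = p) (hN' : N'.rank = p) :
    (M * Nᵀ = M' * N'ᵀ ↔
      ∃ R : Matrix (Fin p) (Fin p) ℝ, IsUnit R ∧ M' = M * R ∧ N' = N * (R⁻¹)ᵀ) ∧
    {q : Matrix (Fin m) (Fin p) ℝ × Matrix (Fin n) (Fin p) ℝ |
        q.1.rank = p ∧ q.2.rank = p ∧ q.1 * q.2ᵀ = M * Nᵀ} =
      {q : Matrix (Fin m) (Fin p) ℝ × Matrix (Fin n) (Fin p) ℝ |
        ∃ R : Matrix (Fin p) (Fin p) ℝ, IsUnit R ∧ q.1 = M * R ∧ q.2 = N * (R⁻¹)ᵀ} := by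
  refine ⟨fiber_aux M M' N N' hM hN hN', ?_⟩
  ext ⟨A, B⟩
  simp only [Set.mem_setOf_eq]
  constructor
  · rintro ⟨_, hB, h⟩
    exact (fiber_aux M A N B hM hN hB).mp h.symm
  · rintro ⟨R, hR, rfl, rfl⟩
    have hd := (Matrix.isUnit_iff_isUnit_det _).mp hR
    have hd' : IsUnit ((R⁻¹)ᵀ).det := by
      rw [det_transpose]
      exact Matrix.isUnit_nonsing_inv_det _ hd
    have hB : (N * (R⁻¹)ᵀ).rank = p := by
      rw [Matrix.rank_mul_eq_left_of_isUnit_det _ _ hd', hN]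
    refine ⟨by rw [Matrix.rank_mul_eq_left_of_isUnit_det _ _ hd, hM], hB, ?_⟩
    exact ((fiber_aux M _ N _ hM hN hB).mpr ⟨R, hR, rfl, rfl⟩).symm
end

section
/- Let M, M' be m×p real matrices with orthonormal columns (MᵀM = M'ᵀM' = I_p) and let N, N' be n×p real matrices of rank p. Then M Nᵀ = M' N'ᵀ if and only if there exists an orthogonal p×p real matrix R (RᵀR = I_p) such that M' = M R and N' = N R. Consequently, the fiber of the map π(M,N) = M Nᵀ over M Nᵀ is { (M R, N R) : R ∈ O(p) }. -/
open Matrix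

lemma fiber_fwd {m n p : ℕ}
    (M M' : Matrix (Fin m) (Fin p) ℝ) (N N' : Matrix (Fin n) (Fin p) ℝ)
    (hM : Mᵀ * M = 1) (hM' : M'ᵀ * M' = 1) (hN' : N'.rank = p) (h : M * Nᵀ = M' * N'ᵀ) :
    ∃ R : Matrix (Fin p) (Fin p) ℝ, Rᵀ * R = 1 ∧ M' = M * R ∧ N' = N * R := by
  have hr : (N'ᵀ * N').rank = p := by rw [Matrix.rank_transpose_mul_self, hN']
  have hu : IsUnit (N'ᵀ * N') := by
    rw [← Matrix.mulVec_surjective_iff_isUnit]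
    have : LinearMap.range (N'ᵀ * N').mulVecLin = ⊤ := by
      apply Submodule.eq_top_of_finrank_eq
      rw [← Matrix.rank, hr]; simp
    exact LinearMap.range_eq_top.mp this
  have h1 : Nᵀ = (Mᵀ * M') * N'ᵀ := by
    rw [Matrix.mul_assoc, ← h, ← Matrix.mul_assoc, hM, Matrix.one_mul]
  have h2 : M' = M * (Mᵀ * M') := by
    have : M' * (N'ᵀ * N') = M * (Mᵀ * M') * (N'ᵀ * N') := by
      rw [← Matrix.mul_assoc, ← h, h1]; simp only [Matrix.mul_assoc]
    obtain ⟨B, hB, -⟩ := isUnit_iff_exists.mp hu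
    have := congrArg (· * B) this
    simpa only [Matrix.mul_assoc _ (N'ᵀ * N') B, hB, Matrix.mul_one] using this
  have h3 : (Mᵀ * M')ᵀ * (Mᵀ * M') = 1 := by
    rw [Matrix.transpose_mul, Matrix.transpose_transpose, Matrix.mul_assoc, ← h2, hM']
  refine ⟨Mᵀ * M', h3, h2, ?_⟩
  have h4 : N = N' * (Mᵀ * M')ᵀ := by
    rw [← Matrix.transpose_transpose N, h1, Matrix.transpose_mul, Matrix.transpose_transpose]
  rw [h4, Matrix.mul_assoc, h3, Matrix.mul_one]

lemma fiber_bwd {m n p : ℕ}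
    (M : Matrix (Fin m) (Fin p) ℝ) (N : Matrix (Fin n) (Fin p) ℝ)
    (R : Matrix (Fin p) (Fin p) ℝ) (hR : Rᵀ * R = 1) :
    M * R * (N * R)ᵀ = M * Nᵀ := by
  have h : R * Rᵀ = 1 := mul_eq_one_comm.mp hR
  rw [Matrix.transpose_mul, Matrix.mul_assoc, ← Matrix.mul_assoc R, h, Matrix.one_mul]


/-- With orthonormal first factors, M Nᵀ = M' N'ᵀ iff M' = M R and N' = N R for some
orthogonal R; consequently the fiber of π over M Nᵀ is { (M R, N R) : R ∈ O(p) }. -/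
theorem fiber_Op (m n p : ℕ) (hp : 0 < p) (hpm : p ≤ m) (hpn : p ≤ n)
    (M M' : Matrix (Fin m) (Fin p) ℝ) (N N' : Matrix (Fin n) (Fin p) ℝ)
    (hM : Mᵀ * M = 1) (hM' : M'ᵀ * M' = 1) (hN : N.rank = p) (hN' : N'.rank = p) :
    (M * Nᵀ = M' * N'ᵀ ↔
      ∃ R : Matrix (Fin p) (Fin p) ℝ, Rᵀ * R = 1 ∧ M' = M * R ∧ N' = N * R) ∧
    {q : Matrix (Fin m) (Fin p) ℝ × Matrix (Fin n) (Fin p) ℝ |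
        q.1ᵀ * q.1 = 1 ∧ q.2.rank = p ∧ q.1 * q.2ᵀ = M * Nᵀ} =
      {q : Matrix (Fin m) (Fin p) ℝ × Matrix (Fin n) (Fin p) ℝ |
        ∃ R : Matrix (Fin p) (Fin p) ℝ, Rᵀ * R = 1 ∧ q.1 = M * R ∧ q.2 = N * R} := by
  refine ⟨⟨fiber_fwd M M' N N' hM hM' hN', ?_⟩, ?_⟩
  · rintro ⟨R, hR, rfl, rfl⟩
    exact (fiber_bwd M N R hR).symm
  · ext ⟨A, B⟩
    simp only [Set.mem_setOf_eq]
    constructor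
    · rintro ⟨hA, hB, h⟩
      exact fiber_fwd M A N B hM hA hB h.symm
    · rintro ⟨R, hR, rfl, rfl⟩
      refine ⟨?_, ?_, fiber_bwd M N R hR⟩
      · rw [Matrix.transpose_mul, Matrix.mul_assoc, ← Matrix.mul_assoc Mᵀ, hM, Matrix.one_mul, hR]
      · rw [Matrix.rank_mul_eq_left_of_isUnit_det, hN]
        exact (Matrix.isUnit_iff_isUnit_det R).mp
          (IsUnit.of_mul_eq_one_right _ hR)
end

section
/- Let M be an m×p real matrix of rank p and N an n×p real matrix of rank p. The linear map Φ : ℝ^{m×p} × ℝ^{n×p} → ℝ^{m×n} defined by Φ(Ṁ, Ṅ) = Ṁ Nᵀ + M Ṅᵀ has rank p(m+n−p); that is, the dimension of its range equals p(m+n−p). Hence the map π(M,N) = M Nᵀ is a submersion at every point of its domain. -/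
open Matrix

/-- The differential of π : (M,N) ↦ M Nᵀ at (M,N). -/
def dPi (m n p : ℕ) (M : Matrix (Fin m) (Fin p) ℝ) (N : Matrix (Fin n) (Fin p) ℝ) :
    (Matrix (Fin m) (Fin p) ℝ × Matrix (Fin n) (Fin p) ℝ) →ₗ[ℝ] Matrix (Fin m) (Fin n) ℝ where
  toFun d := d.1 * Nᵀ + M * d.2ᵀ
  map_add' a b := by
    simp [Matrix.add_mul, Matrix.mul_add, Matrix.transpose_add]
    abel
  map_smul' c a := by
    simp [Matrix.transpose_smul, Matrix.smul_mul, Matrix.mul_smul, smul_add]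

theorem exists_left_inv_aux (m p : ℕ) (M : Matrix (Fin m) (Fin p) ℝ) (hM : M.rank = p) :
    ∃ A : Matrix (Fin p) (Fin m) ℝ, A * M = 1 := by
  have hinj : LinearMap.ker M.mulVecLin = ⊥ := by
    have h := LinearMap.finrank_range_add_finrank_ker M.mulVecLin
    have h2 : Module.finrank ℝ (LinearMap.range M.mulVecLin) = p := hM
    rw [h2, Module.finrank_fin_fun] at h
    exact Submodule.finrank_eq_zero.mp (by omega)
  obtain ⟨g, hg⟩ := LinearMap.exists_leftInverse_of_injective M.mulVecLin hinj
  refine ⟨LinearMap.toMatrix' g, ?_⟩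
  have h3 : LinearMap.toMatrix' (g ∘ₗ M.mulVecLin) = 1 := by rw [hg, LinearMap.toMatrix'_id]
  rwa [LinearMap.toMatrix'_comp, ← Matrix.toLin'_apply', LinearMap.toMatrix'_toLin'] at h3

/-- The parametrisation of the kernel. -/
def kerPar (m n p : ℕ) (M : Matrix (Fin m) (Fin p) ℝ) (N : Matrix (Fin n) (Fin p) ℝ) :
    Matrix (Fin p) (Fin p) ℝ →ₗ[ℝ] (Matrix (Fin m) (Fin p) ℝ × Matrix (Fin n) (Fin p) ℝ) where
  toFun K := (M * K, -(N * Kᵀ))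
  map_add' a b := by
    simp [Matrix.mul_add, Matrix.transpose_add]
    abel
  map_smul' c a := by
    simp [Matrix.transpose_smul, Matrix.mul_smul]

/-- The differential of π at a full-rank pair (M,N) has rank p(m+n-p); hence π is a
submersion at every point of its domain. -/
theorem dPi_rank (m n p : ℕ) (hp : 0 < p) (hpm : p ≤ m) (hpn : p ≤ n)
    (M : Matrix (Fin m) (Fin p) ℝ) (N : Matrix (Fin n) (Fin p) ℝ)
    (hM : M.rank = p) (hN : N.rank = p) :
    Module.finrank ℝ (LinearMap.range (dPi m n p M N)) = p * (m + n - p) := by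
  obtain ⟨A, hA⟩ := exists_left_inv_aux m p M hM
  obtain ⟨B, hB⟩ := exists_left_inv_aux n p N hN
  have hBt : Nᵀ * Bᵀ = 1 := by rw [← Matrix.transpose_mul, hB, Matrix.transpose_one]
  have hinj : Function.Injective (kerPar m n p M N) := by
    intro K L h
    have h1 : M * K = M * L := congrArg Prod.fst h
    have h2 := congrArg (fun X => A * X) h1
    simpa [← Matrix.mul_assoc, hA] using h2
  have hker : LinearMap.ker (dPi m n p M N) = LinearMap.range (kerPar m n p M N) := by
    ext ⟨X, Y⟩
    constructor
    · intro h
      have h0 : X * Nᵀ + M * Yᵀ = 0 := h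
      have hX : X = M * (-(Yᵀ * Bᵀ)) := by
        have h1 := congrArg (fun Z => Z * Bᵀ) h0
        simp only [Matrix.add_mul, Matrix.mul_assoc, hBt, Matrix.mul_one, Matrix.zero_mul] at h1
        rw [Matrix.mul_neg]
        exact eq_neg_of_add_eq_zero_left h1
      have hAX : A * X = -(Yᵀ * Bᵀ) := by
        conv_lhs => rw [hX, ← Matrix.mul_assoc, hA, Matrix.one_mul]
      have hY : Yᵀ = -((A * X) * Nᵀ) := by
        have h1 := congrArg (fun Z => A * Z) h0
        simp only [Matrix.mul_add, ← Matrix.mul_assoc, hA, Matrix.one_mul, Matrix.mul_zero] at h1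
        exact eq_neg_of_add_eq_zero_right h1
      refine ⟨A * X, Prod.ext ?_ ?_⟩
      · change M * (A * X) = X
        rw [hAX, ← hX]
      · change -(N * (A * X)ᵀ) = Y
        have h1 := congrArg Matrix.transpose hY
        rw [Matrix.transpose_transpose, Matrix.transpose_neg, Matrix.transpose_mul,
          Matrix.transpose_transpose] at h1
        exact h1.symm
    · rintro ⟨K, hK⟩
      rw [← hK]
      change (M * K) * Nᵀ + M * (-(N * Kᵀ))ᵀ = 0
      simp [Matrix.transpose_mul, Matrix.mul_assoc]
  have h := LinearMap.finrank_range_add_finrank_ker (dPi m n p M N)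
  rw [hker, LinearMap.finrank_range_of_inj hinj, Module.finrank_prod] at h
  simp only [Module.finrank_matrix, Module.finrank_self, Fintype.card_fin, mul_one] at h
  obtain ⟨k, rfl⟩ := Nat.exists_eq_add_of_le hpm
  have e : p + k + n - p = k + n := by omega
  rw [e]
  nlinarith
end

section
/- Let M be an m×p real matrix of rank p and N an n×p real matrix of rank p. A pair (Ṁ, Ṅ) ∈ ℝ^{m×p} × ℝ^{n×p} satisfies trace((MᵀM)⁻¹ Ṁᵀ M Ṙ) − trace((NᵀN)⁻¹ Ṅᵀ N Ṙᵀ) = 0 for all Ṙ ∈ ℝ^{p×p} (i.e., it is orthogonal to the vertical space with respect to the weighted metric ḡ) if and only if NᵀN MᵀṀ = Ṅᵀ N MᵀM, equivalently MᵀṀ (MᵀM)⁻¹ = (NᵀN)⁻¹ Ṅᵀ N. -/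
open Matrix

theorem aux_gram_unit (k p : ℕ) (M : Matrix (Fin k) (Fin p) ℝ) (hM : M.rank = p) :
    IsUnit (Mᵀ * M).det := by
  rw [← Matrix.isUnit_iff_isUnit_det]
  have h : (Mᵀ * M).rank = p := by rw [Matrix.rank_transpose_mul_self, hM]
  rw [← Matrix.linearIndependent_rows_iff_isUnit, linearIndependent_iff_card_eq_finrank_span, Set.finrank,
    ← Matrix.rank_eq_finrank_span_row, h, Fintype.card_fin]

/-- Orthogonality of (Ṁ,Ṅ) to the vertical space with respect to the weighted metric ḡ
is characterized by NᵀN MᵀṀ = ṄᵀN MᵀM, equivalently MᵀṀ (MᵀM)⁻¹ = (NᵀN)⁻¹ ṄᵀN. -/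
theorem horizontal_weighted_characterization (m n p : ℕ) (hp : 0 < p) (hpm : p ≤ m) (hpn : p ≤ n)
    (M : Matrix (Fin m) (Fin p) ℝ) (N : Matrix (Fin n) (Fin p) ℝ)
    (hM : M.rank = p) (hN : N.rank = p)
    (dM : Matrix (Fin m) (Fin p) ℝ) (dN : Matrix (Fin n) (Fin p) ℝ) :
    ((∀ dR : Matrix (Fin p) (Fin p) ℝ,
        ((Mᵀ * M)⁻¹ * dMᵀ * (M * dR)).trace - ((Nᵀ * N)⁻¹ * dNᵀ * (N * dRᵀ)).trace = 0) ↔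
      Nᵀ * N * (Mᵀ * dM) = dNᵀ * N * (Mᵀ * M)) ∧
    (Nᵀ * N * (Mᵀ * dM) = dNᵀ * N * (Mᵀ * M) ↔
      Mᵀ * dM * (Mᵀ * M)⁻¹ = (Nᵀ * N)⁻¹ * (dNᵀ * N)) := by
  have hA := aux_gram_unit m p M hM
  have hB := aux_gram_unit n p N hN
  have hXt : ((Mᵀ * M)⁻¹ * dMᵀ * M)ᵀ = Mᵀ * dM * (Mᵀ * M)⁻¹ := by
    simp [Matrix.transpose_mul, Matrix.transpose_nonsing_inv, Matrix.mul_assoc]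
  have h2 : Nᵀ * N * (Mᵀ * dM) = dNᵀ * N * (Mᵀ * M) ↔
      Mᵀ * dM * (Mᵀ * M)⁻¹ = (Nᵀ * N)⁻¹ * (dNᵀ * N) := by
    generalize Mᵀ * M = A at *
    generalize Nᵀ * N = B at *
    generalize Mᵀ * dM = C at *
    generalize dNᵀ * N = D at *
    constructor
    · intro h
      calc C * A⁻¹ = B⁻¹ * (B * C) * A⁻¹ := by rw [Matrix.nonsing_inv_mul_cancel_left _ _ hB]
        _ = B⁻¹ * D := by
          rw [h, Matrix.mul_assoc, Matrix.mul_nonsing_inv_cancel_right _ _ hA]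
    · intro h
      calc B * C = B * (C * A⁻¹ * A) := by rw [Matrix.nonsing_inv_mul_cancel_right _ _ hA]
        _ = D * A := by
          rw [h, ← Matrix.mul_assoc, Matrix.mul_nonsing_inv_cancel_left _ _ hB]
  refine ⟨?_, h2⟩
  rw [h2, ← hXt, ← Matrix.mul_assoc]
  simp only [← Matrix.mul_assoc]
  generalize (Mᵀ * M)⁻¹ * dMᵀ * M = X
  generalize (Nᵀ * N)⁻¹ * dNᵀ * N = Y
  have key : ∀ R : Matrix (Fin p) (Fin p) ℝ, (Y * Rᵀ).trace = (Yᵀ * R).trace := by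
    intro R
    rw [← Matrix.trace_transpose, Matrix.transpose_mul, Matrix.transpose_transpose,
      Matrix.trace_mul_comm]
  constructor
  · intro h
    have : X = Yᵀ := by
      apply Matrix.ext_iff_trace_mul_right.2
      intro R
      have := h R
      rw [key] at this
      linarith
    rw [this, Matrix.transpose_transpose]
  · intro h R
    rw [key, ← h, Matrix.transpose_transpose, sub_self]
end

section
/- Let M be an m×p real matrix of rank p and N an n×p real matrix of rank p. The linear map on ℝ^{p×p} given by K ↦ MᵀM NᵀN K + K MᵀM NᵀN is bijective; hence for every C ∈ ℝ^{p×p} the Sylvester equation MᵀM NᵀN K + K MᵀM NᵀN = C has a unique solution K. -/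
open Matrix

lemma isUnit_gram_aux {m p : ℕ} (M : Matrix (Fin m) (Fin p) ℝ) (hM : M.rank = p) :
    IsUnit (Mᵀ * M).det := by
  have h : (Mᵀ * M).rank = p := by rw [rank_transpose_mul_self, hM]
  rw [isUnit_iff_ne_zero]
  intro h0
  obtain ⟨v, hv, hv0⟩ := Matrix.exists_mulVec_eq_zero_iff.2 h0
  have h1 := LinearMap.finrank_range_add_finrank_ker (Mᵀ * M).mulVecLin
  rw [Matrix.rank] at h
  rw [h] at h1
  simp only [Module.finrank_fintype_fun_eq_card, Fintype.card_fin] at h1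
  have h2 : Module.finrank ℝ (LinearMap.ker (Mᵀ * M).mulVecLin) = 0 := by omega
  rw [Submodule.finrank_eq_zero] at h2
  have h3 : v ∈ LinearMap.ker (Mᵀ * M).mulVecLin := hv0
  rw [h2] at h3
  exact hv (by simpa using h3)

lemma trace_gram_nonneg_aux {m p : ℕ} (X : Matrix (Fin m) (Fin p) ℝ) :
    0 ≤ (X * Xᵀ).trace := by
  simpa using (posSemidef_self_mul_conjTranspose X).trace_nonneg

lemma trace_gram_zero_aux {m p : ℕ} (X : Matrix (Fin m) (Fin p) ℝ)
    (h : (X * Xᵀ).trace = 0) : X = 0 := by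
  apply trace_mul_conjTranspose_self_eq_zero_iff.1
  simpa using h

lemma sylvester_inj_aux {m n p : ℕ}
    (M : Matrix (Fin m) (Fin p) ℝ) (N : Matrix (Fin n) (Fin p) ℝ)
    (hM : M.rank = p) (hN : N.rank = p) (K : Matrix (Fin p) (Fin p) ℝ)
    (h : Mᵀ * M * (Nᵀ * N) * K + K * (Mᵀ * M * (Nᵀ * N)) = 0) : K = 0 := by
  have hA := isUnit_gram_aux M hM
  have hB := isUnit_gram_aux N hN
  have hAs : (Mᵀ * M)ᵀ = Mᵀ * M := by simp
  have hBs : (Nᵀ * N)ᵀ = Nᵀ * N := by simp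
  have e1 : ((N * K * (N * (Nᵀ * N)⁻¹)ᵀ) * (N * K * (N * (Nᵀ * N)⁻¹)ᵀ)ᵀ).trace
      = ((Nᵀ * N) * K * (Nᵀ * N)⁻¹ * Kᵀ).trace := by
    have : (N * K * (N * (Nᵀ * N)⁻¹)ᵀ) * (N * K * (N * (Nᵀ * N)⁻¹)ᵀ)ᵀ
        = N * (K * ((Nᵀ * N)⁻¹ * (Nᵀ * N) * (Nᵀ * N)⁻¹) * Kᵀ * Nᵀ) := by
      simp only [transpose_mul, transpose_transpose, transpose_nonsing_inv, Matrix.mul_assoc]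
    rw [this, nonsing_inv_mul _ hB, Matrix.one_mul, trace_mul_comm,
      Matrix.mul_assoc _ Nᵀ N, trace_mul_comm]
    simp only [Matrix.mul_assoc]
  have e2 : ((M * (Mᵀ * M)⁻¹ * K * Mᵀ) * (M * (Mᵀ * M)⁻¹ * K * Mᵀ)ᵀ).trace
      = ((Mᵀ * M)⁻¹ * K * (Mᵀ * M) * Kᵀ).trace := by
    have : (M * (Mᵀ * M)⁻¹ * K * Mᵀ) * (M * (Mᵀ * M)⁻¹ * K * Mᵀ)ᵀ
        = (M * (Mᵀ * M)⁻¹ * K * (Mᵀ * M) * Kᵀ) * ((Mᵀ * M)⁻¹ * Mᵀ) := by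
      simp only [transpose_mul, transpose_transpose, transpose_nonsing_inv, Matrix.mul_assoc]
    rw [this, trace_mul_comm]
    have : (Mᵀ * M)⁻¹ * Mᵀ * (M * (Mᵀ * M)⁻¹ * K * (Mᵀ * M) * Kᵀ) =
      ((Mᵀ * M)⁻¹ * (Mᵀ * M)) * ((Mᵀ * M)⁻¹ * K * (Mᵀ * M) * Kᵀ) := by
      simp only [Matrix.mul_assoc]
    rw [this, nonsing_inv_mul _ hA, Matrix.one_mul]
  have p1 := trace_gram_nonneg_aux (N * K * (N * (Nᵀ * N)⁻¹)ᵀ)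
  have p2 := trace_gram_nonneg_aux (M * (Mᵀ * M)⁻¹ * K * Mᵀ)
  have z1 := trace_gram_zero_aux (N * K * (N * (Nᵀ * N)⁻¹)ᵀ)
  rw [e1] at p1 z1
  rw [e2] at p2
  have key : (Nᵀ * N) * K * (Nᵀ * N)⁻¹ * Kᵀ + (Mᵀ * M)⁻¹ * K * (Mᵀ * M) * Kᵀ = 0 := by
    have h' := congrArg (fun Z => (Mᵀ * M)⁻¹ * Z * ((Nᵀ * N)⁻¹ * Kᵀ)) h
    simp only [Matrix.mul_zero, Matrix.zero_mul] at h'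
    rw [← h']
    generalize Mᵀ * M = A at *
    generalize Nᵀ * N = B at *
    have a1 : A⁻¹ * (A * B * K) = B * K := by
      rw [Matrix.mul_assoc A, nonsing_inv_mul_cancel_left _ _ hA]
    have a2 : A⁻¹ * (K * (A * B)) * (B⁻¹ * Kᵀ) = A⁻¹ * K * A * (B * (B⁻¹ * Kᵀ)) := by
      simp only [Matrix.mul_assoc]
    rw [Matrix.mul_add, Matrix.add_mul, a1, a2, mul_nonsing_inv_cancel_left _ _ hB]
    simp only [Matrix.mul_assoc]
  have kt := congrArg trace key
  rw [trace_add, trace_zero] at kt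
  have z := z1 (by linarith)
  have hz : (Nᵀ * N) * K * ((Nᵀ * N)⁻¹ * (Nᵀ * N)) = 0 := by
    have : (Nᵀ * N) * K * ((Nᵀ * N)⁻¹ * (Nᵀ * N)) =
        Nᵀ * (N * K * (N * (Nᵀ * N)⁻¹)ᵀ) * N := by
      simp only [transpose_mul, transpose_transpose, transpose_nonsing_inv, Matrix.mul_assoc]
    rw [this, z, Matrix.mul_zero, Matrix.zero_mul]
  rw [nonsing_inv_mul _ hB, Matrix.mul_one] at hz
  rw [← nonsing_inv_mul_cancel_left _ K hB, hz, Matrix.mul_zero]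

/-- The Sylvester operator K ↦ MᵀM NᵀN K + K MᵀM NᵀN is bijective when M and N have
full rank p; hence the Sylvester equation has a unique solution for every right-hand side. -/
theorem sylvester_bijective (m n p : ℕ) (hp : 0 < p) (hpm : p ≤ m) (hpn : p ≤ n)
    (M : Matrix (Fin m) (Fin p) ℝ) (N : Matrix (Fin n) (Fin p) ℝ)
    (hM : M.rank = p) (hN : N.rank = p) :
    Function.Bijective (fun K : Matrix (Fin p) (Fin p) ℝ =>
        Mᵀ * M * (Nᵀ * N) * K + K * (Mᵀ * M * (Nᵀ * N))) ∧
    ∀ C : Matrix (Fin p) (Fin p) ℝ, ∃! K : Matrix (Fin p) (Fin p) ℝ,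
        Mᵀ * M * (Nᵀ * N) * K + K * (Mᵀ * M * (Nᵀ * N)) = C := by
  have hb : Function.Bijective (fun K : Matrix (Fin p) (Fin p) ℝ =>
        Mᵀ * M * (Nᵀ * N) * K + K * (Mᵀ * M * (Nᵀ * N))) := by
    let L : Matrix (Fin p) (Fin p) ℝ →ₗ[ℝ] Matrix (Fin p) (Fin p) ℝ :=
      LinearMap.mulLeft ℝ (Mᵀ * M * (Nᵀ * N)) + LinearMap.mulRight ℝ (Mᵀ * M * (Nᵀ * N))
    have hi : Function.Injective L := by
      rw [injective_iff_map_eq_zero]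
      intro K hK
      exact sylvester_inj_aux M N hM hN K hK
    exact ⟨hi, LinearMap.injective_iff_surjective.1 hi⟩
  exact ⟨hb, fun C => hb.existsUnique C⟩
end

section
/- Let M be an m×p real matrix of rank p, N an n×p real matrix of rank p, R an invertible p×p real matrix, and Ẋ ∈ ℝ^{m×n} in the range of (Ṁ,Ṅ) ↦ Ṁ Nᵀ + M Ṅᵀ. If (Ẋ_M, Ẋ_N) is the horizontal lift of Ẋ at (M,N) (i.e., the unique pair with NᵀN MᵀẊ_M = Ẋ_Nᵀ N MᵀM and Ẋ_M Nᵀ + M Ẋ_Nᵀ = Ẋ), then (Ẋ_M R, Ẋ_N R⁻ᵀ) is the horizontal lift of Ẋ at (M R, N R⁻ᵀ): it satisfies the horizontality condition at (M R, N R⁻ᵀ) and (Ẋ_M R)(N R⁻ᵀ)ᵀ + (M R)(Ẋ_N R⁻ᵀ)ᵀ = Ẋ. -/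
open Matrix

/-- Constitutive equation of horizontal lifts in the weighted geometry: if (Ẋ_M, Ẋ_N) is the
horizontal lift of Ẋ at (M,N), then (Ẋ_M R, Ẋ_N R⁻ᵀ) is the horizontal lift of Ẋ at
(M R, N R⁻ᵀ). -/
theorem horizontal_lift_equivariance_weighted (m n p : ℕ) (hp : 0 < p) (hpm : p ≤ m) (hpn : p ≤ n)
    (M : Matrix (Fin m) (Fin p) ℝ) (N : Matrix (Fin n) (Fin p) ℝ)
    (hM : M.rank = p) (hN : N.rank = p)
    (R : Matrix (Fin p) (Fin p) ℝ) (hR : IsUnit R)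
    (X : Matrix (Fin m) (Fin n) ℝ)
    (hX : ∃ (dM : Matrix (Fin m) (Fin p) ℝ) (dN : Matrix (Fin n) (Fin p) ℝ),
        dM * Nᵀ + M * dNᵀ = X)
    (XM : Matrix (Fin m) (Fin p) ℝ) (XN : Matrix (Fin n) (Fin p) ℝ)
    (hhor : Nᵀ * N * (Mᵀ * XM) = XNᵀ * N * (Mᵀ * M))
    (hlift : XM * Nᵀ + M * XNᵀ = X) :
    (N * (R⁻¹)ᵀ)ᵀ * (N * (R⁻¹)ᵀ) * ((M * R)ᵀ * (XM * R)) =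
        (XN * (R⁻¹)ᵀ)ᵀ * (N * (R⁻¹)ᵀ) * ((M * R)ᵀ * (M * R)) ∧
    (XM * R) * (N * (R⁻¹)ᵀ)ᵀ + (M * R) * (XN * (R⁻¹)ᵀ)ᵀ = X := by
  have h1 : R * R⁻¹ = 1 := Matrix.mul_nonsing_inv R ((Matrix.isUnit_iff_isUnit_det R).1 hR)
  have h2 : (R⁻¹)ᵀ * Rᵀ = 1 := by rw [← Matrix.transpose_mul, h1, Matrix.transpose_one]
  have h3 : ∀ {l : ℕ} (B : Matrix (Fin p) (Fin l) ℝ), (R⁻¹)ᵀ * (Rᵀ * B) = B := by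
    intro l B
    rw [← Matrix.mul_assoc, h2, Matrix.one_mul]
  have h4 : ∀ {l : ℕ} (B : Matrix (Fin p) (Fin l) ℝ), R * (R⁻¹ * B) = B := by
    intro l B
    rw [← Matrix.mul_assoc, h1, Matrix.one_mul]
  constructor
  · have h5 := congrArg (fun Z => R⁻¹ * (Z * R)) hhor
    simp only [Matrix.mul_assoc] at h5
    simp only [Matrix.transpose_mul, Matrix.transpose_transpose, Matrix.mul_assoc, h3]
    exact h5
  · simp only [Matrix.transpose_mul, Matrix.transpose_transpose, Matrix.mul_assoc, h4]
    exact hlift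
end

section
/- Let M be an m×p real matrix of rank p, N an n×p real matrix of rank p, and R an invertible p×p real matrix. For all Ẋ_M, X̌_M ∈ ℝ^{m×p} and Ẋ_N, X̌_N ∈ ℝ^{n×p}, trace(((MR)ᵀ(MR))⁻¹ (Ẋ_M R)ᵀ (X̌_M R)) + trace(((NR⁻ᵀ)ᵀ(NR⁻ᵀ))⁻¹ (Ẋ_N R⁻ᵀ)ᵀ (X̌_N R⁻ᵀ)) = trace((MᵀM)⁻¹ Ẋ_Mᵀ X̌_M) + trace((NᵀN)⁻¹ Ẋ_Nᵀ X̌_N). Hence the weighted metric ḡ satisfies the invariance condition required for π(M,N)=MNᵀ to be a Riemannian submersion. -/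
open Matrix

theorem weighted_aux {k p : ℕ} (M X Y : Matrix (Fin k) (Fin p) ℝ)
    (S : Matrix (Fin p) (Fin p) ℝ) (hS : IsUnit S) :
    (((M * S)ᵀ * (M * S))⁻¹ * (X * S)ᵀ * (Y * S)).trace = ((Mᵀ * M)⁻¹ * Xᵀ * Y).trace := by
  have hd : IsUnit S.det := (Matrix.isUnit_iff_isUnit_det S).1 hS
  have hdt : IsUnit Sᵀ.det := by rwa [Matrix.det_transpose]
  have h1 : ((M * S)ᵀ * (M * S))⁻¹ = S⁻¹ * (Mᵀ * M)⁻¹ * (Sᵀ)⁻¹ := by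
    have : (M * S)ᵀ * (M * S) = Sᵀ * ((Mᵀ * M) * S) := by
      simp only [Matrix.transpose_mul, Matrix.mul_assoc]
    rw [this, Matrix.mul_inv_rev, Matrix.mul_inv_rev]
  have h2 : ((M * S)ᵀ * (M * S))⁻¹ * (X * S)ᵀ * (Y * S)
      = S⁻¹ * (((Mᵀ * M)⁻¹ * Xᵀ * Y) * S) := by
    rw [h1, Matrix.transpose_mul]
    simp only [Matrix.mul_assoc]
    rw [Matrix.nonsing_inv_mul_cancel_left _ _ hdt]
  rw [h2, Matrix.trace_mul_comm, Matrix.mul_assoc _ S, Matrix.mul_nonsing_inv _ hd, Matrix.mul_one]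

/-- Invariance of the weighted metric ḡ along the fibers: the value of ḡ on horizontal
lifts transported by (M,N) ↦ (M R, N R⁻ᵀ) is unchanged; hence π(M,N) = M Nᵀ becomes a
Riemannian submersion. -/
theorem weighted_metric_invariance (m n p : ℕ) (hp : 0 < p) (hpm : p ≤ m) (hpn : p ≤ n)
    (M : Matrix (Fin m) (Fin p) ℝ) (N : Matrix (Fin n) (Fin p) ℝ)
    (hM : M.rank = p) (hN : N.rank = p)
    (R : Matrix (Fin p) (Fin p) ℝ) (hR : IsUnit R)
    (XM YM : Matrix (Fin m) (Fin p) ℝ) (XN YN : Matrix (Fin n) (Fin p) ℝ) :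
    (((M * R)ᵀ * (M * R))⁻¹ * (XM * R)ᵀ * (YM * R)).trace +
      (((N * (R⁻¹)ᵀ)ᵀ * (N * (R⁻¹)ᵀ))⁻¹ * (XN * (R⁻¹)ᵀ)ᵀ * (YN * (R⁻¹)ᵀ)).trace =
    ((Mᵀ * M)⁻¹ * XMᵀ * YM).trace + ((Nᵀ * N)⁻¹ * XNᵀ * YN).trace := by
  have hR' : IsUnit (R⁻¹)ᵀ := by
    rw [Matrix.isUnit_iff_isUnit_det, Matrix.det_transpose, ← Matrix.isUnit_iff_isUnit_det]
    exact Matrix.isUnit_nonsing_inv_iff.2 hR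
  rw [weighted_aux M XM YM R hR, weighted_aux N XN YN _ hR']
end

section
/- Let M be an m×p real matrix with MᵀM = I_p and N an n×p real matrix of rank p. The linear map Φ(Ṁ, Ṅ) = Ṁ Nᵀ + M Ṅᵀ, restricted to the subspace { (Ṁ, Ṅ) : MᵀṀ + ṀᵀM = 0 } × ℝ^{n×p} of ℝ^{m×p} × ℝ^{n×p}, has range of dimension p(m+n−p). Hence the map π(M,N) = M Nᵀ restricted to pairs with orthonormal first factor is a submersion onto the manifold of rank-p matrices. -/
open Matrix

/-- The tangent space to the Stiefel manifold at M, as a subspace of ℝ^{m×p}. -/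
def stiefelTangent (m p : ℕ) (M : Matrix (Fin m) (Fin p) ℝ) :
    Submodule ℝ (Matrix (Fin m) (Fin p) ℝ) where
  carrier := {dM | Mᵀ * dM + dMᵀ * M = 0}
  add_mem' := by
    intro a b ha hb
    simp only [Set.mem_setOf_eq] at *
    rw [Matrix.mul_add, Matrix.transpose_add, Matrix.add_mul]
    calc Mᵀ * a + Mᵀ * b + (aᵀ * M + bᵀ * M)
        = (Mᵀ * a + aᵀ * M) + (Mᵀ * b + bᵀ * M) := by abel
      _ = 0 := by rw [ha, hb, add_zero]
  zero_mem' := by simp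
  smul_mem' := by
    intro c a ha
    simp only [Set.mem_setOf_eq] at *
    rw [Matrix.mul_smul, Matrix.transpose_smul, Matrix.smul_mul, ← smul_add, ha, smul_zero]

/-- The differential of π at (M,N), with M orthonormal and N of rank p, restricted to the
tangent space of the Stiefel manifold times ℝ^{n×p}, has range of dimension p(m+n−p);
hence the restricted π is a submersion onto the manifold of rank-p matrices. -/
theorem dPi_restricted_rank (m n p : ℕ) (hp : 0 < p) (hpm : p ≤ m) (hpn : p ≤ n)
    (M : Matrix (Fin m) (Fin p) ℝ) (N : Matrix (Fin n) (Fin p) ℝ)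
    (hM : Mᵀ * M = 1) (hN : N.rank = p) :
    Module.finrank ℝ
        (Submodule.map (dPi m n p M N) ((stiefelTangent m p M).prod ⊤)) =
      p * (m + n - p) := by
  have hinv : IsUnit (Nᵀ * N) := by
    rw [← Matrix.mulVec_injective_iff_isUnit]
    have h : (Nᵀ * N).rank = p := by rw [Matrix.rank_transpose_mul_self, hN]
    have h2 : Function.Surjective (Nᵀ * N).mulVecLin := by
      rw [← LinearMap.range_eq_top]
      apply Submodule.eq_top_of_finrank_eq
      rw [← Matrix.rank, h]; simp
    exact LinearMap.injective_iff_surjective.mpr h2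
  obtain ⟨L, hL⟩ := hinv.exists_right_inv
  let g : Matrix (Fin m) (Fin p) ℝ →ₗ[ℝ] Matrix (Fin p) (Fin p) ℝ :=
    { toFun := fun K => Mᵀ * K
      map_add' := fun a b => Matrix.mul_add _ _ _
      map_smul' := fun c a => Matrix.mul_smul _ _ _ }
  have hg : ∀ K, g K = Mᵀ * K := fun _ => rfl
  have hgs : LinearMap.range g = ⊤ := by
    rw [LinearMap.range_eq_top]
    intro A
    exact ⟨M * A, by rw [hg, ← Matrix.mul_assoc, hM, Matrix.one_mul]⟩
  have hdim := g.finrank_range_add_finrank_ker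
  rw [hgs, finrank_top] at hdim
  let f := (dPi m n p M N).comp ((LinearMap.ker g).subtype.prodMap LinearMap.id)
  have hf : ∀ K B, f (K, B) = K.1 * Nᵀ + M * Bᵀ := fun _ _ => rfl
  have hr : Submodule.map (dPi m n p M N) ((stiefelTangent m p M).prod ⊤) =
      LinearMap.range f := by
    ext X
    constructor
    · rintro ⟨⟨D, B⟩, -, rfl⟩
      refine ⟨(⟨D - M * (Mᵀ * D), ?_⟩, N * (Mᵀ * D)ᵀ + B), ?_⟩
      · rw [LinearMap.mem_ker, hg, Matrix.mul_sub, ← Matrix.mul_assoc, hM, Matrix.one_mul,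
          sub_self]
      · rw [hf]
        change _ = D * Nᵀ + M * Bᵀ
        simp only [Matrix.transpose_add, Matrix.transpose_mul, Matrix.transpose_transpose,
          Matrix.mul_add, Matrix.sub_mul, Matrix.mul_assoc]
        abel
    · rintro ⟨⟨⟨K, hK⟩, B⟩, rfl⟩
      refine ⟨(K, B), ⟨?_, trivial⟩, rfl⟩
      have hK' : Mᵀ * K = 0 := hK
      have h2 : Kᵀ * M = 0 := by
        have := congrArg Matrix.transpose hK'
        simpa using this
      change Mᵀ * K + Kᵀ * M = 0
      rw [hK', h2, add_zero]
  have hinj : Function.Injective f := by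
    rw [← LinearMap.ker_eq_bot, LinearMap.ker_eq_bot']
    rintro ⟨⟨K, hK⟩, B⟩ h
    rw [hf] at h
    have hK' : Mᵀ * K = 0 := hK
    have hB : Bᵀ = 0 := by
      have := congrArg (fun X => Mᵀ * X) h
      simpa [Matrix.mul_add, ← Matrix.mul_assoc, hM, hK'] using this
    have hK0 : K = 0 := by
      have h3 : K * Nᵀ = 0 := by simpa [hB] using h
      calc K = K * ((Nᵀ * N) * L) := by rw [hL, Matrix.mul_one]
        _ = (K * Nᵀ) * (N * L) := by simp only [Matrix.mul_assoc]
        _ = 0 := by rw [h3, Matrix.zero_mul]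
    have hB0 : B = 0 := by simpa using hB
    subst hK0 hB0
    rfl
  rw [hr, LinearMap.finrank_range_of_inj hinj, Module.finrank_prod]
  simp only [Module.finrank_matrix, Fintype.card_fin, Module.finrank_self, mul_one] at hdim ⊢
  obtain ⟨k, rfl⟩ := Nat.exists_eq_add_of_le hpm
  have : p + k + n - p = k + n := by omega
  rw [this]
  nlinarith
end

section
/- Let M be an m×p real matrix with MᵀM = I_p and N an n×p real matrix of rank p. For (Ṁ, Ṅ) with MᵀṀ + ṀᵀM = 0: Ṁ Nᵀ + M Ṅᵀ = 0 if and only if there exists a skew-symmetric Ω ∈ ℝ^{p×p} such that Ṁ = M Ω and Ṅ = N Ω. Thus the vertical space at (M,N) of the restricted submersion π(M,N) = M Nᵀ equals { (M Ω, N Ω) : Ω = −Ωᵀ ∈ ℝ^{p×p} }. -/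
open Matrix

/-- Vertical space in the orthonormal-factor geometry: for M orthonormal and N of rank p,
a tangent pair (Ṁ,Ṅ) satisfies ṀNᵀ + MṄᵀ = 0 iff Ṁ = MΩ and Ṅ = NΩ for some
skew-symmetric Ω. -/
theorem vertical_space_orthonormal (m n p : ℕ) (hp : 0 < p) (hpm : p ≤ m) (hpn : p ≤ n)
    (M : Matrix (Fin m) (Fin p) ℝ) (N : Matrix (Fin n) (Fin p) ℝ)
    (hM : Mᵀ * M = 1) (hN : N.rank = p)
    (dM : Matrix (Fin m) (Fin p) ℝ) (dN : Matrix (Fin n) (Fin p) ℝ)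
    (htang : Mᵀ * dM + dMᵀ * M = 0) :
    dM * Nᵀ + M * dNᵀ = 0 ↔
      ∃ Ω : Matrix (Fin p) (Fin p) ℝ, Ωᵀ = -Ω ∧ dM = M * Ω ∧ dN = N * Ω := by
  constructor
  · intro h
    have hs : (Mᵀ * dM)ᵀ = -(Mᵀ * dM) := by
      rw [transpose_mul, transpose_transpose]
      exact eq_neg_of_add_eq_zero_right htang
    have h1 : (Mᵀ * dM) * Nᵀ + dNᵀ = 0 := by
      have := congrArg (fun X => Mᵀ * X) h
      simpa [Matrix.mul_add, ← Matrix.mul_assoc, hM] using this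
    have h2 : dNᵀ = -((Mᵀ * dM) * Nᵀ) := eq_neg_of_add_eq_zero_right h1
    have h3 : dN = N * (Mᵀ * dM) := by
      have := congrArg transpose h2
      rw [transpose_transpose, transpose_neg, transpose_mul, hs, transpose_transpose] at this
      simpa using this
    refine ⟨Mᵀ * dM, hs, ?_, h3⟩
    have h4 : (dM - M * (Mᵀ * dM)) * Nᵀ = 0 := by
      rw [h2] at h
      rw [Matrix.sub_mul, Matrix.mul_assoc M, sub_eq_add_neg, ← Matrix.mul_neg]
      exact h
    have hu : IsUnit (Nᵀ * N) := by
      rw [← Matrix.mulVec_surjective_iff_isUnit, ← Matrix.coe_mulVecLin, ← LinearMap.range_eq_top]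
      apply Submodule.eq_top_of_finrank_eq
      have := Matrix.rank_transpose_mul_self N
      rw [Matrix.rank, hN] at this
      simpa using this
    have h5 : (dM - M * (Mᵀ * dM)) * (Nᵀ * N) = 0 := by
      rw [← Matrix.mul_assoc, h4, Matrix.zero_mul]
    have h6 := congrArg (fun X => X * (Nᵀ * N)⁻¹) h5
    simp only [Matrix.zero_mul] at h6
    rw [Matrix.mul_nonsing_inv_cancel_right _ _ ((Matrix.isUnit_iff_isUnit_det _).1 hu)] at h6
    exact sub_eq_zero.1 h6
  · rintro ⟨Ω, hΩ, rfl, rfl⟩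
    rw [transpose_mul, hΩ, Matrix.neg_mul, Matrix.mul_neg, Matrix.mul_assoc, add_neg_cancel]
end

section
/- Let M be an m×p real matrix with MᵀM = I_p, N an n×p real matrix of rank p, and let Ẋ ∈ ℝ^{m×n} lie in the range of the differential (Ṁ,Ṅ) ↦ ṀNᵀ + MṄᵀ restricted to pairs with MᵀṀ skew-symmetric. Let Ω be the unique (skew-symmetric) solution of Ω(NᵀN + I) + (NᵀN + I)Ω = MᵀẊN − NᵀẊᵀM, and set S = MᵀẊN − Ω(NᵀN + I), Ẋ_M = Ẋ N (NᵀN)⁻¹ − M(Ω + S)(NᵀN)⁻¹, Ẋ_N = Ẋᵀ M + N Ω. Then MᵀẊ_M is skew-symmetric, MᵀẊ_M + NᵀẊ_N is symmetric, and Ẋ_M Nᵀ + M Ẋ_Nᵀ = Ẋ; moreover (Ẋ_M, Ẋ_N) is the unique pair with these properties. -/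
open Matrix

theorem aux_trace_nonneg {a b : ℕ} (Z : Matrix (Fin a) (Fin b) ℝ) : 0 ≤ (Zᵀ * Z).trace := by
  simp only [Matrix.trace, Matrix.diag, Matrix.mul_apply, Matrix.transpose_apply]
  exact Finset.sum_nonneg fun i _ => Finset.sum_nonneg fun j _ => mul_self_nonneg _

theorem aux_sylv {n p : ℕ} (N : Matrix (Fin n) (Fin p) ℝ) (Z : Matrix (Fin p) (Fin p) ℝ)
    (h : Z * (Nᵀ * N + 1) + (Nᵀ * N + 1) * Z = 0) : Z = 0 := by
  have h1 : (Zᵀ * (Z * (Nᵀ * N + 1) + (Nᵀ * N + 1) * Z)).trace = 0 := by rw [h]; simp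
  have h2 : (Zᵀ * (Z * (Nᵀ * N))).trace = ((N * Zᵀ)ᵀ * (N * Zᵀ)).trace := by
    rw [Matrix.trace_mul_comm]
    simp [Matrix.transpose_mul, Matrix.mul_assoc]
  have h3 : (Zᵀ * ((Nᵀ * N) * Z)).trace = ((N * Z)ᵀ * (N * Z)).trace := by
    simp [Matrix.transpose_mul, Matrix.mul_assoc]
  simp only [Matrix.mul_add, Matrix.add_mul, Matrix.trace_add, Matrix.mul_one, Matrix.one_mul,
    h2, h3] at h1
  have a1 := aux_trace_nonneg (N * Zᵀ)
  have a2 := aux_trace_nonneg (N * Z)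
  have a3 := aux_trace_nonneg Z
  have h4 : (Zᵀ * Z).trace = 0 := by linarith
  have := (Matrix.trace_conjTranspose_mul_self_eq_zero_iff (A := Z)).1
  rw [Matrix.conjTranspose_eq_transpose_of_trivial] at this
  exact this h4

/-- Horizontal lift in the orthonormal-factor geometry: the pair (Ẋ_M, Ẋ_N) built from the
skew-symmetric solution Ω of the Sylvester equation and S = MᵀẊN − Ω(NᵀN + I) is the unique
horizontal pair projecting to Ẋ. -/
theorem horizontal_lift_orthonormal (m n p : ℕ) (hp : 0 < p) (hpm : p ≤ m) (hpn : p ≤ n)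
    (M : Matrix (Fin m) (Fin p) ℝ) (N : Matrix (Fin n) (Fin p) ℝ)
    (hM : Mᵀ * M = 1) (hN : N.rank = p)
    (X : Matrix (Fin m) (Fin n) ℝ)
    (hX : ∃ (dM : Matrix (Fin m) (Fin p) ℝ) (dN : Matrix (Fin n) (Fin p) ℝ),
        (Mᵀ * dM)ᵀ = -(Mᵀ * dM) ∧ dM * Nᵀ + M * dNᵀ = X)
    (Ω S : Matrix (Fin p) (Fin p) ℝ)
    (hΩ : Ω * (Nᵀ * N + 1) + (Nᵀ * N + 1) * Ω = Mᵀ * X * N - Nᵀ * Xᵀ * M)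
    (hS : S = Mᵀ * X * N - Ω * (Nᵀ * N + 1))
    (XM : Matrix (Fin m) (Fin p) ℝ) (XN : Matrix (Fin n) (Fin p) ℝ)
    (hXM : XM = X * N * (Nᵀ * N)⁻¹ - M * (Ω + S) * (Nᵀ * N)⁻¹)
    (hXN : XN = Xᵀ * M + N * Ω) :
    ((Mᵀ * XM)ᵀ = -(Mᵀ * XM) ∧
      (Mᵀ * XM + Nᵀ * XN)ᵀ = Mᵀ * XM + Nᵀ * XN ∧
      XM * Nᵀ + M * XNᵀ = X) ∧
    ∀ (YM : Matrix (Fin m) (Fin p) ℝ) (YN : Matrix (Fin n) (Fin p) ℝ),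
      (Mᵀ * YM)ᵀ = -(Mᵀ * YM) →
      (Mᵀ * YM + Nᵀ * YN)ᵀ = Mᵀ * YM + Nᵀ * YN →
      YM * Nᵀ + M * YNᵀ = X →
        YM = XM ∧ YN = XN := by
  
  have hG : IsUnit (Nᵀ * N).det := by
    have hr : (Nᵀ * N).rank = p := by rw [Matrix.rank_transpose_mul_self, hN]
    rw [← Matrix.isUnit_iff_isUnit_det]
    have hli : LinearIndependent ℝ (Nᵀ * N).col := by
      rw [linearIndependent_iff_card_eq_finrank_span, Set.finrank, ← Matrix.rank_eq_finrank_span_cols, hr]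
      simp
    exact Matrix.linearIndependent_cols_iff_isUnit.1 hli
  have hsk : Ωᵀ = -Ω := by
    have hT := congrArg Matrix.transpose hΩ
    simp only [Matrix.transpose_add, Matrix.transpose_sub, Matrix.transpose_mul,
      Matrix.transpose_transpose, Matrix.transpose_one] at hT
    have : Ω + Ωᵀ = 0 := by
      apply aux_sylv N
      have e : (Ω + Ωᵀ) * (Nᵀ * N + 1) + (Nᵀ * N + 1) * (Ω + Ωᵀ) =
        (Ω * (Nᵀ * N + 1) + (Nᵀ * N + 1) * Ω) + ((Nᵀ * N + 1) * Ωᵀ + Ωᵀ * (Nᵀ * N + 1)) := by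
        noncomm_ring
      rw [e, hΩ, hT]
      simp only [Matrix.mul_assoc]
      abel
    exact eq_neg_of_add_eq_zero_right this
  have hMXM : Mᵀ * XM = Ω := by
    have e : Mᵀ * XM = (Mᵀ * X * N - (Mᵀ * M) * (Ω + S)) * (Nᵀ * N)⁻¹ := by
      rw [hXM]; simp only [Matrix.mul_sub, Matrix.sub_mul, Matrix.mul_assoc]
    have e2 : Mᵀ * X * N - (Mᵀ * M) * (Ω + S) = Ω * (Nᵀ * N) := by
      rw [hM, hS, Matrix.one_mul, Matrix.mul_add, Matrix.mul_one]; abel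
    rw [e, e2, Matrix.mul_nonsing_inv_cancel_right _ _ hG]
  have hrec : XM * Nᵀ + M * XNᵀ = X := by
    obtain ⟨dM, dN, -, hd⟩ := hX
    have e1 : X * N - M * (Ω + S) = (dM - M * (Mᵀ * dM)) * (Nᵀ * N) + M * Ω * (Nᵀ * N) := by
      have : M * (Ω + S) = M * (Mᵀ * X * N) - M * Ω * (Nᵀ * N) := by
        rw [hS]; simp only [Matrix.mul_add, Matrix.mul_sub, Matrix.mul_one, Matrix.mul_assoc]; abel
      have e3 : Mᵀ * X = Mᵀ * dM * Nᵀ + dNᵀ := by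
        rw [← hd, Matrix.mul_add, ← Matrix.mul_assoc, ← Matrix.mul_assoc, hM, Matrix.one_mul]
      rw [this, e3, ← hd]
      simp only [Matrix.mul_add, Matrix.add_mul, Matrix.sub_mul, Matrix.mul_assoc]; abel
    have e2 : XM = dM - M * (Mᵀ * dM) + M * Ω := by
      rw [hXM, ← Matrix.sub_mul, e1, ← Matrix.add_mul, Matrix.mul_nonsing_inv_cancel_right _ _ hG]
    have e3 : XNᵀ = Mᵀ * dM * Nᵀ + dNᵀ - Ω * Nᵀ := by
      rw [hXN, Matrix.transpose_add, Matrix.transpose_mul, Matrix.transpose_mul, hsk,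
        Matrix.transpose_transpose, ← hd, Matrix.mul_add, ← Matrix.mul_assoc, ← Matrix.mul_assoc,
        hM, Matrix.one_mul, Matrix.neg_mul]; abel
    rw [e2, e3, ← hd]
    simp only [Matrix.mul_add, Matrix.mul_sub, Matrix.add_mul, Matrix.sub_mul, Matrix.mul_assoc]
    abel
  refine ⟨⟨by rw [hMXM, hsk], ?_, hrec⟩, ?_⟩
  · rw [hMXM, hXN]
    simp only [Matrix.transpose_add, Matrix.transpose_mul, Matrix.transpose_transpose, hsk,
      Matrix.mul_add, Matrix.add_mul, Matrix.neg_mul, Matrix.mul_one, Matrix.one_mul,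
      Matrix.mul_assoc] at hΩ ⊢
    rw [← sub_eq_zero] at hΩ ⊢
    rw [← neg_eq_zero, ← hΩ]
    abel
  · intro YM YN h1 h2 h3
    have hYN : YN = Xᵀ * M + N * (Mᵀ * YM) := by
      have : Mᵀ * X = Mᵀ * YM * Nᵀ + YNᵀ := by
        rw [← h3, Matrix.mul_add, ← Matrix.mul_assoc, ← Matrix.mul_assoc, hM, Matrix.one_mul]
      have := congrArg Matrix.transpose this
      rw [Matrix.transpose_add, Matrix.transpose_mul (Mᵀ * YM), h1, Matrix.transpose_mul,
        Matrix.transpose_transpose, Matrix.transpose_transpose, Matrix.transpose_transpose] at this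
      rw [this, Matrix.mul_neg]; abel
    have hW : Mᵀ * YM = Ω := by
      generalize Mᵀ * YM = W at *
      rw [← sub_eq_zero]
      apply aux_sylv N
      rw [hYN] at h2
      simp only [Matrix.transpose_add, Matrix.transpose_mul, Matrix.transpose_transpose, h1,
        Matrix.mul_add, Matrix.add_mul, Matrix.neg_mul, Matrix.mul_one, Matrix.one_mul,
        Matrix.mul_sub, Matrix.sub_mul, Matrix.mul_assoc] at hΩ h2 ⊢
      rw [← sub_eq_zero] at hΩ h2
      rw [← neg_eq_zero, ← add_zero (0 : Matrix (Fin p) (Fin p) ℝ)]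
      nth_rewrite 1 [← hΩ]
      rw [← h2]
      abel
    have hN2 : YN = XN := by rw [hYN, hW, hXN]
    refine ⟨?_, hN2⟩
    have e : YM * Nᵀ = XM * Nᵀ := by
      rw [← hrec, hN2] at h3
      exact add_right_cancel h3
    have e' := congrArg (fun T => T * N * (Nᵀ * N)⁻¹) e
    simp only [Matrix.mul_assoc YM, Matrix.mul_assoc XM] at e'
    rw [Matrix.mul_nonsing_inv _ hG] at e'
    simpa [Matrix.mul_nonsing_inv _ hG, ← Matrix.mul_assoc] using e'
end

section
/- Let M be an m×p real matrix with MᵀM = I_p, N an n×p real matrix of rank p, R a p×p orthogonal matrix, and Ẋ ∈ ℝ^{m×n}. If (Ẋ_M, Ẋ_N) is the horizontal lift of Ẋ at (M,N) (i.e., MᵀẊ_M skew-symmetric, MᵀẊ_M + NᵀẊ_N symmetric, and Ẋ_M Nᵀ + M Ẋ_Nᵀ = Ẋ), then (Ẋ_M R, Ẋ_N R) is the horizontal lift of Ẋ at (MR, NR); moreover the Euclidean metric is invariant: trace((Ẋ_M R)ᵀ(X̌_M R)) + trace((Ẋ_N R)ᵀ(X̌_N R)) = trace(Ẋ_Mᵀ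 X̌_M) + trace(Ẋ_Nᵀ X̌_N) for all X̌_M, X̌_N. -/
open Matrix

/-- Constitutive equation of horizontal lifts in the orthonormal-factor geometry: if
(Ẋ_M, Ẋ_N) is the horizontal lift of Ẋ at (M,N) and R is orthogonal, then (Ẋ_M R, Ẋ_N R) is
the horizontal lift of Ẋ at (MR, NR), and the Euclidean metric is invariant. -/
theorem horizontal_lift_equivariance_orthonormal (m n p : ℕ)
    (hp : 0 < p) (hpm : p ≤ m) (hpn : p ≤ n)
    (M : Matrix (Fin m) (Fin p) ℝ) (N : Matrix (Fin n) (Fin p) ℝ)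
    (hM : Mᵀ * M = 1) (hN : N.rank = p)
    (R : Matrix (Fin p) (Fin p) ℝ) (hR : Rᵀ * R = 1)
    (X : Matrix (Fin m) (Fin n) ℝ)
    (XM : Matrix (Fin m) (Fin p) ℝ) (XN : Matrix (Fin n) (Fin p) ℝ)
    (hskew : (Mᵀ * XM)ᵀ = -(Mᵀ * XM))
    (hsym : (Mᵀ * XM + Nᵀ * XN)ᵀ = Mᵀ * XM + Nᵀ * XN)
    (hlift : XM * Nᵀ + M * XNᵀ = X) :
    (((M * R)ᵀ * (XM * R))ᵀ = -((M * R)ᵀ * (XM * R)) ∧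
      ((M * R)ᵀ * (XM * R) + (N * R)ᵀ * (XN * R))ᵀ =
        (M * R)ᵀ * (XM * R) + (N * R)ᵀ * (XN * R) ∧
      (XM * R) * (N * R)ᵀ + (M * R) * (XN * R)ᵀ = X) ∧
    ∀ (YM : Matrix (Fin m) (Fin p) ℝ) (YN : Matrix (Fin n) (Fin p) ℝ),
      ((XM * R)ᵀ * (YM * R)).trace + ((XN * R)ᵀ * (YN * R)).trace =
        (XMᵀ * YM).trace + (XNᵀ * YN).trace := by
  have hR' : R * Rᵀ = 1 := mul_eq_one_comm.mp hR
  have key : ∀ (k : ℕ) (A B : Matrix (Fin k) (Fin p) ℝ),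
      (A * R)ᵀ * (B * R) = Rᵀ * (Aᵀ * B) * R := by
    intro k A B
    simp only [Matrix.transpose_mul, Matrix.mul_assoc]
  have key2 : ∀ (k l : ℕ) (A : Matrix (Fin k) (Fin p) ℝ) (B : Matrix (Fin l) (Fin p) ℝ),
      (A * R) * (B * R)ᵀ = A * Bᵀ := by
    intro k l A B
    rw [Matrix.transpose_mul, Matrix.mul_assoc, ← Matrix.mul_assoc R, hR', Matrix.one_mul]
  have conjT : ∀ S : Matrix (Fin p) (Fin p) ℝ, (Rᵀ * S * R)ᵀ = Rᵀ * Sᵀ * R := by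
    intro S
    simp only [Matrix.transpose_mul, Matrix.transpose_transpose, Matrix.mul_assoc]
  have conjtr : ∀ S : Matrix (Fin p) (Fin p) ℝ, (Rᵀ * S * R).trace = S.trace := by
    intro S
    rw [Matrix.trace_mul_comm, ← Matrix.mul_assoc, hR', Matrix.one_mul]
  refine ⟨⟨?_, ?_, ?_⟩, ?_⟩
  · rw [key, conjT, hskew, Matrix.mul_neg, Matrix.neg_mul]
  · rw [key, key, ← Matrix.add_mul, ← Matrix.mul_add, conjT, hsym]
  · rw [key2, key2, hlift]
  · intro YM YN
    rw [key, key, conjtr, conjtr]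
end
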